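/- Let ℛ be a finite irreducible crystallographic root system in an N-dimensional Euclidean space with Weyl-invariant inner product ⟨·,·⟩, and let c : ℛ → ℂ be a multiplicity function invariant under the Weyl group W of ℛ. Then for every α ∈ ℛ and every α-series Γ one has Σ_{β∈Γ} c_β ⟨α,β⟩·(α∧β) = 0. Consequently, if the bilinear form G_ℛ(u,v) = Σ_{α∈ℛ} c_α ⟨α,u⟩⟨α,v⟩ is non-degenerate, then (ℛ,c) is a trigonometric ∨-system, i.e. Σ_{β∈Γ} c_β ⟨α, β^∨⟩_G (α∧β) = 0 for every α ∈ ℛ and every α-series Γ, where β^∨ is the G_ℛ-dual vector of β. -/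

import Mathlib

open scoped Classical
open Finset

noncomputable section

/-- The inner product on `ℝ^N` determined by a (positive definite) matrix `B`. -/
def ipB {N : ℕ} (B : Matrix (Fin N) (Fin N) ℝ) (u v : Fin N → ℝ) : ℝ :=
  ∑ i, ∑ j, B i j * u i * v j

/-- The complex-bilinear extension `⟨α, w⟩` for a real covector `α` and `w ∈ ℂ^N`. -/
def ipBC {N : ℕ} (B : Matrix (Fin N) (Fin N) ℝ) (α : Fin N → ℝ) (w : Fin N → ℂ) : ℂ :=
  ∑ i, ∑ j, (B i j : ℂ) * (α i : ℂ) * w j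

/-- `γ` is proportional to `α`. -/
def CollinR {N : ℕ} (α γ : Fin N → ℝ) : Prop := ∃ t : ℝ, γ = t • α

/-- `γ₁ ∼ γ₂` iff `γ₁ + γ₂` or `γ₁ - γ₂` is an integer multiple of `α`. -/
def SeriesRelR {N : ℕ} (α γ₁ γ₂ : Fin N → ℝ) : Prop :=
  ∃ m : ℤ, γ₁ + γ₂ = (m : ℝ) • α ∨ γ₁ - γ₂ = (m : ℝ) • α

/-- `Γ` is a (maximal) `α`-series of `R`. -/
def IsSeriesR {N : ℕ} (R : Finset (Fin N → ℝ)) (α : Fin N → ℝ)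
    (Γ : Finset (Fin N → ℝ)) : Prop :=
  Γ.Nonempty ∧ (∀ γ ∈ Γ, γ ∈ R ∧ ¬ CollinR α γ) ∧
    (∀ γ₁ ∈ Γ, ∀ γ₂ ∈ Γ, SeriesRelR α γ₁ γ₂) ∧
    (∀ β ∈ R, ¬ CollinR α β → (∃ γ ∈ Γ, SeriesRelR α β γ) → β ∈ Γ)

/-!
Only two properties of an `α`-series `Γ` matter: it lies in `ℛ`, and it is stable under `s_α`. The
form `α ∧ β` and the multiplicity `c_β` are unchanged by `β ↦ s_α β` whereas `⟨α, β⟩` changes sign,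
so the summands of the series condition cancel in pairs.

The same reflection applied to `G_ℛ` shows that the root `α` is an eigenvector:
`G_ℛ(u, α) = λ_α ⟨u, α⟩` for all `u`. For `u = β^∨` this reads `⟨β, α⟩ = λ_α ⟨α, β^∨⟩`, and `β = α`
shows `λ_α ≠ 0`. Since `λ_α` does not depend on `β`, the ∨-condition is the first identity divided
by `λ_α`.
-/

section BilinearForm

variable {k V A : Type*} [Field k] [AddCommGroup V] [Module k V] [CommRing A] [Algebra k A]
  {B : LinearMap.BilinForm k V} {R : Finset V} {c : V → A}

/-- The reflection `s_α` of a vector space with bilinear form `B`, applied to `β`. It is the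
identity in the degenerate case `B α α = 0`. -/
def rootReflection (B : LinearMap.BilinForm k V) (α β : V) : V :=
  β - (2 * B α β / B α α) • α

/-- The value `(α ∧ β)(a, b)` of the alternating form attached to `α` and `β`, which are identified
with covectors by means of `B`. -/
def wedge (B : LinearMap.BilinForm k V) (α β a b : V) : k :=
  B α a * B β b - B α b * B β a

/-- The form `G_ℛ(φ, v) = Σ_{α ∈ ℛ} c_α φ(α) ⟨α, v⟩`. Its first argument is a functional
`φ = ⟨·, u⟩`, so that `u` may be a vector of the scalar extension `A ⊗ V`. -/
def multiplicityForm (B : LinearMap.BilinForm k V) (R : Finset V) (c : V → A) (φ : V →ₗ[k] A)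
    (v : V) : A :=
  ∑ α ∈ R, c α * φ α * algebraMap k A (B α v)

/-- The eigenvalue `λ_β = G_ℛ(β, β) / ⟨β, β⟩` of `G_ℛ` relative to `⟨·, ·⟩` on the root `β`. -/
def rootEigenvalue (B : LinearMap.BilinForm k V) (R : Finset V) (c : V → A) (β : V) : A :=
  ∑ γ ∈ R, c γ * algebraMap k A (B γ β ^ 2 / B β β)

lemma apply_rootReflection {α : V} (hα : B α α ≠ 0) (β : V) :
    B α (rootReflection B α β) = -B α β := by
  rw [rootReflection, map_sub, map_smul, smul_eq_mul, div_mul_cancel₀ _ hα]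
  ring

lemma rootReflection_involutive {α : V} (hα : B α α ≠ 0) :
    Function.Involutive (rootReflection B α) := by
  intro β
  rw [rootReflection, apply_rootReflection hα, rootReflection, mul_neg, neg_div, neg_smul,
    sub_neg_eq_add, sub_add_cancel]

lemma wedge_rootReflection (α β a b : V) :
    wedge B α (rootReflection B α β) a b = wedge B α β a b := by
  simp only [wedge, rootReflection, map_sub, map_smul, LinearMap.sub_apply, LinearMap.smul_apply,
    smul_eq_mul]
  ring

lemma sum_mul_wedge_eq_zero [NeZero (2 : k)] {α : V} (hα : B α α ≠ 0) {Γ : Finset V}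
    (hΓ : ∀ β ∈ Γ, rootReflection B α β ∈ Γ) (hc : ∀ β ∈ Γ, c (rootReflection B α β) = c β)
    (a b : V) :
    ∑ β ∈ Γ, c β * algebraMap k A (B α β) * algebraMap k A (wedge B α β a b) = 0 := by
  refine sum_involution (fun β _ ↦ rootReflection B α β) (fun β hβ ↦ ?cancel)
    (fun β _ hne hfix ↦ hne ?fixed) hΓ fun β _ ↦ rootReflection_involutive hα β
  case cancel =>
    rw [hc β hβ, apply_rootReflection hα, wedge_rootReflection, map_neg]
    ring
  case fixed =>
    have hneg : B α β = -B α β := by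
      rw [← apply_rootReflection hα, hfix]
    have hzero : B α β = 0 :=
      (mul_eq_zero.mp (by linear_combination hneg : 2 * B α β = 0)).resolve_left two_ne_zero
    rw [hzero, map_zero, mul_zero, zero_mul]

lemma multiplicityForm_apply_root [NeZero (2 : k)] (hB : B.IsSymm) {β : V} (hβ : B β β ≠ 0)
    (hR : ∀ γ ∈ R, rootReflection B β γ ∈ R) (hc : ∀ γ ∈ R, c (rootReflection B β γ) = c γ)
    (φ : V →ₗ[k] A) :
    multiplicityForm B R c φ β = rootEigenvalue B R c β * φ β := by
  have reflect_summand : ∀ γ ∈ R,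
      c γ * φ γ * algebraMap k A (B γ β) =
        -(c (rootReflection B β γ) * φ (rootReflection B β γ) *
            algebraMap k A (B (rootReflection B β γ) β)) +
          2 * (c γ * algebraMap k A (B γ β ^ 2 / B β β) * φ β) := by
    intro γ hγ
    rw [hc γ hγ, hB.eq (rootReflection B β γ) β, apply_rootReflection hβ, rootReflection, map_sub,
      map_smul, Algebra.smul_def, hB.eq β γ, sq, mul_div_assoc, mul_div_assoc]
    simp only [map_mul, map_neg, map_ofNat]
    ring
  have sum_reflect : ∑ γ ∈ R, c (rootReflection B β γ) * φ (rootReflection B β γ) *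
      algebraMap k A (B (rootReflection B β γ) β) = multiplicityForm B R c φ β :=
    sum_nbij' (rootReflection B β) (rootReflection B β) hR hR
      (fun γ _ ↦ rootReflection_involutive hβ γ) (fun γ _ ↦ rootReflection_involutive hβ γ)
      fun _ _ ↦ rfl
  have form_eq : multiplicityForm B R c φ β =
      -multiplicityForm B R c φ β + 2 * (rootEigenvalue B R c β * φ β) := by
    conv_lhs => rw [multiplicityForm, sum_congr rfl reflect_summand]
    rw [sum_add_distrib, sum_neg_distrib, sum_reflect, ← mul_sum, ← sum_mul, rootEigenvalue]
  have two_isUnit : IsUnit (2 : A) := by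
    simpa only [map_ofNat] using (IsUnit.mk0 (2 : k) two_ne_zero).map (algebraMap k A)
  exact two_isUnit.mul_left_cancel (by linear_combination form_eq)

lemma sum_mul_dual_mul_wedge_eq_zero [NeZero (2 : k)] (hB : B.IsSymm) {α : V} (hαR : α ∈ R)
    (hα : B α α ≠ 0) (hR : ∀ β ∈ R, rootReflection B α β ∈ R)
    (hc : ∀ β ∈ R, c (rootReflection B α β) = c β) {dual : V → V →ₗ[k] A}
    (hdual : ∀ β ∈ R, multiplicityForm B R c (dual β) α = algebraMap k A (B β α))
    {Γ : Finset V} (hΓR : Γ ⊆ R) (hΓ : ∀ β ∈ Γ, rootReflection B α β ∈ Γ) (a b : V) :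
    ∑ β ∈ Γ, c β * dual β α * algebraMap k A (wedge B α β a b) = 0 := by
  have eigenvalue_mul_dual (β : V) (hβ : β ∈ R) :
      rootEigenvalue B R c α * dual β α = algebraMap k A (B α β) := by
    rw [← multiplicityForm_apply_root hB hα hR hc, hdual β hβ, hB.eq]
  have eigenvalue_isUnit : IsUnit (rootEigenvalue B R c α) :=
    isUnit_of_mul_isUnit_left
      (eigenvalue_mul_dual α hαR ▸ (IsUnit.mk0 _ hα).map (algebraMap k A))
  rw [← eigenvalue_isUnit.mul_right_eq_zero, mul_sum,
    ← sum_mul_wedge_eq_zero hα hΓ (fun β hβ ↦ hc β (hΓR hβ)) a b]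
  refine sum_congr rfl fun β hβ ↦ ?_
  rw [← eigenvalue_mul_dual β (hΓR hβ)]
  ring

theorem rootSystem_is_trigVSystem_general [NeZero (2 : k)] (hB : B.IsSymm)
    (hne : ∀ α ∈ R, B α α ≠ 0) (hR : ∀ α ∈ R, ∀ β ∈ R, rootReflection B α β ∈ R)
    (hc : ∀ α ∈ R, ∀ β ∈ R, c (rootReflection B α β) = c β) :
    (∀ α ∈ R, ∀ Γ ⊆ R, (∀ β ∈ Γ, rootReflection B α β ∈ Γ) → ∀ a b : V,
      ∑ β ∈ Γ, c β * algebraMap k A (B α β) * algebraMap k A (wedge B α β a b) = 0) ∧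
    ∀ dual : V → V →ₗ[k] A,
      (∀ β ∈ R, ∀ v : V, multiplicityForm B R c (dual β) v = algebraMap k A (B β v)) →
      ∀ α ∈ R, ∀ Γ ⊆ R, (∀ β ∈ Γ, rootReflection B α β ∈ Γ) → ∀ a b : V,
        ∑ β ∈ Γ, c β * dual β α * algebraMap k A (wedge B α β a b) = 0 :=
  ⟨fun α hα _ hΓR hΓ ↦ sum_mul_wedge_eq_zero (hne α hα) hΓ fun β hβ ↦ hc α hα β (hΓR hβ),
    fun _ hdual α hα _ hΓR hΓ ↦ sum_mul_dual_mul_wedge_eq_zero hB hα (hne α hα) (hR α hα)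
      (hc α hα) (fun β hβ ↦ hdual β hβ α) hΓR hΓ⟩

end BilinearForm

section Coordinates

variable {N : ℕ} {B : Matrix (Fin N) (Fin N) ℝ}

/-- `ipB B` as a bilinear form, built so that `ipBForm B u v` unfolds to `ipB B u v`, which
`Matrix.toBilin' B u v` does not. -/
def ipBForm (B : Matrix (Fin N) (Fin N) ℝ) : LinearMap.BilinForm ℝ (Fin N → ℝ) :=
  LinearMap.mk₂ ℝ (ipB B)
    (fun u u' v ↦ by simp only [ipB, Pi.add_apply, mul_add, add_mul, sum_add_distrib])
    (fun t u v ↦ by simp only [ipB, Pi.smul_apply, smul_eq_mul, mul_sum, mul_left_comm, mul_assoc])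
    (fun u v v' ↦ by simp only [ipB, Pi.add_apply, mul_add, sum_add_distrib])
    (fun t u v ↦ by simp only [ipB, Pi.smul_apply, smul_eq_mul, mul_sum, mul_left_comm])

/-- The functional `⟨·, w⟩` on `ℝ^N` given by a complex vector `w`. -/
def ipBCFunctional (B : Matrix (Fin N) (Fin N) ℝ) (w : Fin N → ℂ) : (Fin N → ℝ) →ₗ[ℝ] ℂ where
  toFun α := ipBC B α w
  map_add' α β := by
    simp only [ipBC, Pi.add_apply, Complex.ofReal_add, mul_add, add_mul, sum_add_distrib]
  map_smul' t α := by
    simp only [ipBC, Pi.smul_apply, smul_eq_mul, Complex.ofReal_mul, RingHom.id_apply,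
      Complex.real_smul, mul_sum, mul_left_comm, mul_assoc]

lemma ipBForm_eq_toBilin' (B : Matrix (Fin N) (Fin N) ℝ) : ipBForm B = B.toBilin' := by
  refine LinearMap.ext₂ fun u v ↦ ?_
  change ipB B u v = _
  simp only [ipB, Matrix.toBilin'_apply, mul_comm (B _ _)]

lemma ipBForm_isSymm (hB : B.IsSymm) : (ipBForm B).IsSymm :=
  ipBForm_eq_toBilin' B ▸ Matrix.isSymm_toBilin'_iff_isSymm.mpr hB

lemma ipBForm_self_pos (hB : B.PosDef) {u : Fin N → ℝ} (hu : u ≠ 0) : 0 < ipBForm B u u := by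
  rw [ipBForm_eq_toBilin', Matrix.toBilin'_apply']
  exact hB.dotProduct_mulVec_pos hu

lemma IsSeriesR.subset {R Γ : Finset (Fin N → ℝ)} {α : Fin N → ℝ} (hΓ : IsSeriesR R α Γ) :
    Γ ⊆ R :=
  fun β hβ ↦ (hΓ.2.1 β hβ).1

lemma IsSeriesR.sub_intCast_smul_mem {R Γ : Finset (Fin N → ℝ)} {α β : Fin N → ℝ}
    (hΓ : IsSeriesR R α Γ) (hβ : β ∈ Γ) {m : ℤ} (hm : β - (m : ℝ) • α ∈ R) :
    β - (m : ℝ) • α ∈ Γ := by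
  obtain ⟨-, hsub, -, hmax⟩ := hΓ
  refine hmax _ hm (fun ⟨t, ht⟩ ↦ (hsub β hβ).2 ⟨t + m, ?_⟩) ⟨β, hβ, -m, Or.inr ?_⟩
  · rw [add_smul, ← ht, sub_add_cancel]
  · rw [Int.cast_neg, neg_smul, sub_sub_cancel_left]

lemma IsSeriesR.rootReflection_mem {R Γ : Finset (Fin N → ℝ)} {α β : Fin N → ℝ}
    {B : LinearMap.BilinForm ℝ (Fin N → ℝ)} (hΓ : IsSeriesR R α Γ) (hα : B α α ≠ 0) (hβ : β ∈ Γ)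
    (hint : ∃ m : ℤ, 2 * B α β = m * B α α) (hR : rootReflection B α β ∈ R) :
    rootReflection B α β ∈ Γ := by
  obtain ⟨m, hm⟩ := hint
  have reflection_eq : rootReflection B α β = β - (m : ℝ) • α := by
    rw [rootReflection, hm, mul_div_cancel_right₀ _ hα]
  rw [reflection_eq] at hR ⊢
  exact hΓ.sub_intCast_smul_mem hβ hR

end Coordinates

/-- an irreducible crystallographic root system with Weyl-invariant
multiplicities satisfies
`Σ_{β ∈ Γ} c_β ⟨α,β⟩ (α∧β) = 0` for every root `α` and every `α`-series `Γ`;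
consequently, if `G_ℛ` is non-degenerate then `(ℛ, c)` is a trigonometric ∨-system. -/
theorem rootSystem_is_trigVSystem {N : ℕ} (hN : 1 ≤ N)
    (B : Matrix (Fin N) (Fin N) ℝ) (hBpd : B.PosDef)
    (R : Finset (Fin N → ℝ)) (c : (Fin N → ℝ) → ℂ)
    (h0 : (0 : Fin N → ℝ) ∉ R)
    (hspan : Submodule.span ℝ (R : Set (Fin N → ℝ)) = ⊤)
    (hirr : ¬ ∃ R₁ R₂ : Finset (Fin N → ℝ), R₁.Nonempty ∧ R₂.Nonempty ∧
      R₁ ∪ R₂ = R ∧ (∀ α ∈ R₁, α ∉ R₂) ∧ ∀ α ∈ R₁, ∀ β ∈ R₂, ipB B α β = 0)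
    (hint : ∀ α ∈ R, ∀ β ∈ R, ∃ m : ℤ, 2 * ipB B α β = (m : ℝ) * ipB B α α)
    (hrefl : ∀ α ∈ R, ∀ β ∈ R, β - (2 * ipB B α β / ipB B α α) • α ∈ R)
    (hcinv : ∀ α ∈ R, ∀ β ∈ R, c (β - (2 * ipB B α β / ipB B α α) • α) = c β) :
    (∀ α ∈ R, ∀ Γ : Finset (Fin N → ℝ), IsSeriesR R α Γ →
      ∀ a b : Fin N → ℝ, ∑ β ∈ Γ, c β * (ipB B α β : ℂ) *
        ((ipB B α a * ipB B β b - ipB B α b * ipB B β a : ℝ) : ℂ) = 0) ∧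
    ((∀ u : Fin N → ℝ,
        (∀ v : Fin N → ℝ, (∑ α ∈ R, c α * (ipB B α u : ℂ) * (ipB B α v : ℂ)) = 0) →
        u = 0) →
      ∀ dual : (Fin N → ℝ) → (Fin N → ℂ),
        (∀ β ∈ R, ∀ v : Fin N → ℝ,
          (∑ α ∈ R, c α * ipBC B α (dual β) * (ipB B α v : ℂ)) = (ipB B β v : ℂ)) →
        ∀ α ∈ R, ∀ Γ : Finset (Fin N → ℝ), IsSeriesR R α Γ →
          ∀ a b : Fin N → ℝ, ∑ β ∈ Γ, c β * ipBC B α (dual β) *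
            ((ipB B α a * ipB B β b - ipB B α b * ipB B β a : ℝ) : ℂ) = 0) := by
  have hne (α : Fin N → ℝ) (hα : α ∈ R) : ipBForm B α α ≠ 0 :=
    (ipBForm_self_pos hBpd (ne_of_mem_of_not_mem hα h0)).ne'
  have hstable (α) (hα : α ∈ R) (Γ) (hΓ : IsSeriesR R α Γ) (β) (hβ : β ∈ Γ) :
      rootReflection (ipBForm B) α β ∈ Γ :=
    hΓ.rootReflection_mem (hne α hα) hβ (hint α hα β (hΓ.subset hβ)) (hrefl α hα β (hΓ.subset hβ))
  obtain ⟨series_condition, dual_condition⟩ := rootSystem_is_trigVSystem_general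
    (ipBForm_isSymm (Matrix.isHermitian_iff_isSymm.mp hBpd.isHermitian)) hne hrefl hcinv
  exact ⟨fun α hα Γ hΓ ↦ series_condition α hα Γ hΓ.subset (hstable α hα Γ hΓ),
    fun _ dual hdual α hα Γ hΓ ↦ dual_condition (fun β ↦ ipBCFunctional B (dual β)) hdual
      α hα Γ hΓ.subset (hstable α hα Γ hΓ)⟩

end
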